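/- Fix (x, y) ∈ E × E and define ĥₙ(x, y) := n^{−1} Σ_{j=1}^{n+1} Aⱼ with Aⱼ := wⱼ^{−2d} K((Zⱼ⁻ − x)/wⱼ) K((Zⱼ − y)/wⱼ). Then for every n ≥ 1, Var(ĥₙ(x, y)) ≤ 8 ‖K‖_∞⁴ B / (n · w_{n+1}^{4d} · (1 − b^{−1})). In particular, if 4βd < 1, this variance tends to 0 as n → ∞. -/

import Mathlib

open MeasureTheory ProbabilityTheory Filter

/-!
Every summand of the estimator is a function of `(Zⱼ⁻, Zⱼ)` bounded by
`C = ‖K‖_∞² / w_{n+1}^{2d}`, because the bandwidths decrease. Rescaling by `C` and using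
`1 + b^{-k} ≤ 2`, the covariance of the `j`-th and `k`-th summands is at most
`2 B C² b^{-|j - k|}`. A row of the covariance matrix is dominated by two geometric series, so the
variance of the sum of the `n + 1 ≤ 2 n` terms is at most `8 n B C² / (1 - b⁻¹)`; dividing by `n²`
gives the bound.
-/

section GeometricSums

variable {r : ℝ}

theorem sum_pow_comp_le_of_injOn {ι : Type*} (hr0 : 0 ≤ r) (hr1 : r < 1) {s : Finset ι}
    {f : ι → ℕ} (hf : Set.InjOn f s) : ∑ k ∈ s, r ^ f k ≤ (1 - r)⁻¹ := by
  rw [← Finset.sum_image (f := fun i => r ^ i) hf, ← tsum_geometric_of_lt_one hr0 hr1]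
  exact (summable_geometric_of_lt_one hr0 hr1).sum_le_tsum _ fun i _ => pow_nonneg hr0 i

theorem sum_pow_natDist_le (hr0 : 0 ≤ r) (hr1 : r < 1) (s : Finset ℕ) (j : ℕ) :
    ∑ k ∈ s, r ^ Nat.dist j k ≤ 2 * (1 - r)⁻¹ := by
  rw [← Finset.sum_filter_add_sum_filter_not s (· ≤ j), two_mul]
  -- on either side of `j`, the distance to `j` is injective
  refine add_le_add (sum_pow_comp_le_of_injOn hr0 hr1 ?_) (sum_pow_comp_le_of_injOn hr0 hr1 ?_) <;>
  · intro k hk l hl hkl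
    simp only [Finset.coe_filter, Set.mem_ofPred_eq] at hk hl
    simp only [Nat.dist] at hkl
    omega

end GeometricSums

theorem mul_inv_mul_cancel_of_abs_le {a C : ℝ} (h : |a| ≤ C) : C * (C⁻¹ * a) = a := by
  rcases eq_or_ne C 0 with rfl | hC
  · simp [abs_nonpos_iff.mp h]
  · exact mul_inv_cancel_left₀ hC a

theorem abs_inv_mul_le_one_of_abs_le {a C : ℝ} (h : |a| ≤ C) : |C⁻¹ * a| ≤ 1 := by
  have hC : 0 ≤ C := (abs_nonneg a).trans h
  rw [abs_mul, abs_of_nonneg (inv_nonneg.mpr hC)]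
  exact inv_mul_le_one_of_le₀ h hC

section Variance

variable {Ω S : Type*} [MeasurableSpace Ω] [MeasurableSpace S] {P : Measure Ω}

theorem variance_sum_le_of_covariance_le_geometric [IsFiniteMeasure P] {A : ℕ → Ω → ℝ}
    {s : Finset ℕ} (hA : ∀ j ∈ s, MemLp (A j) 2 P) {M r : ℝ} (hM : 0 ≤ M) (hr0 : 0 ≤ r)
    (hr1 : r < 1)
    (hcov : ∀ j ∈ s, ∀ k ∈ s, j ≤ k → cov[A j, A k; P] ≤ M * r ^ (k - j)) :
    Var[fun ω => ∑ j ∈ s, A j ω; P] ≤ s.card * (2 * M * (1 - r)⁻¹) := by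
  have hcov_dist : ∀ j ∈ s, ∀ k ∈ s, cov[A j, A k; P] ≤ M * r ^ Nat.dist j k := by
    intro j hj k hk
    rcases le_total j k with hjk | hkj
    · rw [Nat.dist_eq_sub_of_le hjk]
      exact hcov j hj k hk hjk
    · rw [Nat.dist_eq_sub_of_le_right hkj, covariance_comm]
      exact hcov k hk j hj hkj
  calc Var[fun ω => ∑ j ∈ s, A j ω; P]
      = ∑ j ∈ s, ∑ k ∈ s, cov[A j, A k; P] := variance_fun_sum' hA
    _ ≤ ∑ j ∈ s, M * ∑ k ∈ s, r ^ Nat.dist j k := by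
        simp only [Finset.mul_sum]
        exact Finset.sum_le_sum fun j hj => Finset.sum_le_sum (hcov_dist j hj)
    _ ≤ ∑ _j ∈ s, M * (2 * (1 - r)⁻¹) := by
        gcongr
        exact sum_pow_natDist_le hr0 hr1 s _
    _ = s.card * (2 * M * (1 - r)⁻¹) := by
        rw [Finset.sum_const, nsmul_eq_mul]
        ring

/-- The geometric mixing condition: bounded observables of `X` at times `1 ≤ k ≤ n` decorrelate at
rate `b^{-(n - k)}`, up to the transient factor `1 + b^{-k}`. -/
def HasGeometricCovarianceDecay (P : Measure Ω) (X : ℕ → Ω → S) (B b : ℝ) : Prop :=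
  ∀ g h : S → ℝ, Measurable g → Measurable h → (∀ s, |g s| ≤ 1) → (∀ s, |h s| ≤ 1) →
    ∀ k n : ℕ, 1 ≤ k → k ≤ n →
      |cov[fun ω => g (X k ω), fun ω => h (X n ω); P]| ≤
        B * b ^ (-((n : ℝ) - k)) * (1 + b ^ (-(k : ℝ)))

theorem memLp_comp_of_abs_le [IsFiniteMeasure P] {X : Ω → S} (hX : Measurable X) {f : S → ℝ}
    (hf : Measurable f) {C : ℝ} (hfC : ∀ s, |f s| ≤ C) (p : ENNReal) :
    MemLp (fun ω => f (X ω)) p P :=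
  .of_bound (hf.comp hX).aestronglyMeasurable C (.of_forall fun ω => hfC (X ω))

theorem hasGeometricCovarianceDecay_prodMk {S' : Type*} [MeasurableSpace S']
    [IsProbabilityMeasure P] {X : ℕ → Ω → S} {Y : ℕ → Ω → S'} (hX : ∀ n, Measurable (X n))
    (hY : ∀ n, Measurable (Y n)) {B b : ℝ}
    (hcov : ∀ g h : S → S' → ℝ, Measurable (Function.uncurry g) →
      Measurable (Function.uncurry h) → (∀ u v, |g u v| ≤ 1) → (∀ u v, |h u v| ≤ 1) →
      ∀ k n : ℕ, 1 ≤ k → k ≤ n →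
        |∫ ω, g (X k ω) (Y k ω) * h (X n ω) (Y n ω) ∂P -
          (∫ ω, g (X k ω) (Y k ω) ∂P) * (∫ ω, h (X n ω) (Y n ω) ∂P)| ≤
          B * b ^ (-((n : ℝ) - k)) * (1 + b ^ (-(k : ℝ)))) :
    HasGeometricCovarianceDecay P (fun n ω => (X n ω, Y n ω)) B b := by
  intro g h hg hh hg1 hh1 k n hk hkn
  have hXY : ∀ j, Measurable fun ω => (X j ω, Y j ω) := fun j => (hX j).prodMk (hY j)
  rw [covariance_eq_sub (memLp_comp_of_abs_le (hXY k) hg hg1 2)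
    (memLp_comp_of_abs_le (hXY n) hh hh1 2)]
  exact hcov (fun u v => g (u, v)) (fun u v => h (u, v)) hg hh (fun u v => hg1 (u, v))
    (fun u v => hh1 (u, v)) k n hk hkn

namespace HasGeometricCovarianceDecay

variable {X : ℕ → Ω → S} {B b : ℝ}

theorem nonneg (hdecay : HasGeometricCovarianceDecay P X B b) (hb : 0 < b) : 0 ≤ B := by
  have hbound := (abs_nonneg _).trans (hdecay 0 0 measurable_zero measurable_zero
    (by simp) (by simp) 1 1 le_rfl le_rfl)
  rw [mul_assoc] at hbound
  exact nonneg_of_mul_nonneg_left hbound (by positivity)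

theorem abs_covariance_le (hdecay : HasGeometricCovarianceDecay P X B b) (hb : 1 < b)
    {f g : S → ℝ} (hf : Measurable f) (hg : Measurable g) {C D : ℝ} (hfC : ∀ s, |f s| ≤ C)
    (hgD : ∀ s, |g s| ≤ D) (hC : 0 ≤ C) (hD : 0 ≤ D) {k n : ℕ} (hk : 1 ≤ k) (hkn : k ≤ n) :
    |cov[fun ω => f (X k ω), fun ω => g (X n ω); P]| ≤ C * D * (2 * B) * b⁻¹ ^ (n - k) := by
  have hB : 0 ≤ B := hdecay.nonneg (by positivity)
  have hpow : b ^ (-((n : ℝ) - k)) = b⁻¹ ^ (n - k) := by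
    rw [← Nat.cast_sub hkn, Real.rpow_neg (by positivity), Real.rpow_natCast, inv_pow]
  have htransient : b ^ (-(k : ℝ)) ≤ 1 := Real.rpow_le_one_of_one_le_of_nonpos hb.le (by simp)
  have hnormalized := hdecay (fun s => C⁻¹ * f s) (fun s => D⁻¹ * g s) (hf.const_mul _)
    (hg.const_mul _) (fun s => abs_inv_mul_le_one_of_abs_le (hfC s))
    (fun s => abs_inv_mul_le_one_of_abs_le (hgD s)) k n hk hkn
  calc |cov[fun ω => f (X k ω), fun ω => g (X n ω); P]|
      = C * D * |cov[fun ω => C⁻¹ * f (X k ω), fun ω => D⁻¹ * g (X n ω); P]| := by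
        rw [← abs_of_nonneg (mul_nonneg hC hD), ← abs_mul, mul_assoc,
          ← covariance_const_mul_right, ← covariance_const_mul_left]
        simp only [mul_inv_mul_cancel_of_abs_le (hfC _), mul_inv_mul_cancel_of_abs_le (hgD _)]
    _ ≤ C * D * (B * b⁻¹ ^ (n - k) * (1 + 1)) := by
        rw [hpow] at hnormalized
        gcongr
        exact hnormalized.trans (by gcongr)
    _ = C * D * (2 * B) * b⁻¹ ^ (n - k) := by ring

theorem variance_sum_le [IsFiniteMeasure P] (hdecay : HasGeometricCovarianceDecay P X B b)
    (hb : 1 < b) (hX : ∀ n, Measurable (X n)) {s : Finset ℕ} (hs : ∀ j ∈ s, 1 ≤ j)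
    {f : ℕ → S → ℝ} (hf : ∀ j ∈ s, Measurable (f j)) {C : ℝ} (hC : 0 ≤ C)
    (hfC : ∀ j ∈ s, ∀ z, |f j z| ≤ C) :
    Var[fun ω => ∑ j ∈ s, f j (X j ω); P] ≤ s.card * (4 * C ^ 2 * B * (1 - b⁻¹)⁻¹) := by
  have hB : 0 ≤ B := hdecay.nonneg (by positivity)
  have hvar : Var[fun ω => ∑ j ∈ s, f j (X j ω); P] ≤
      s.card * (2 * (C * C * (2 * B)) * (1 - b⁻¹)⁻¹) :=
    variance_sum_le_of_covariance_le_geometric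
      (fun j hj => memLp_comp_of_abs_le (hX j) (hf j hj) (hfC j hj) 2) (by positivity)
      (by positivity) (inv_lt_one_of_one_lt₀ hb) fun j hj k hk hjk =>
        (le_abs_self _).trans <| hdecay.abs_covariance_le hb (hf j hj) (hf k hk) (hfC j hj)
          (hfC k hk) hC hC (hs j hj) hjk
  exact hvar.trans_eq (by ring)

end HasGeometricCovarianceDecay

end Variance

section KernelEstimator

variable {V : Type*} [AddCommGroup V] [Module ℝ V]

/-- The rescaled product kernel centred at `(x, y)` with bandwidth `h`; the paper's `Aⱼ` is its
value at `(Zⱼ⁻, Zⱼ)` for `h = wⱼ`. The exponent `d` is not tied to the dimension of `V`. -/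
noncomputable def productKernel (K : V → ℝ) (d : ℕ) (x y : V) (h : ℝ) (p : V × V) : ℝ :=
  (h ^ (2 * d))⁻¹ * (K (h⁻¹ • (p.1 - x)) * K (h⁻¹ • (p.2 - y)))

/-- The kernel estimator `ĥₙ(x, y)` of the paper, for observations `Xⱼ = (Zⱼ⁻, Zⱼ)`. As in the
paper, the sum has `n + 1` terms and is divided by `n`; for `n = 0` the value is `0`. -/
noncomputable def kernelEstimator {Ω : Type*} (K : V → ℝ) (d : ℕ) (w : ℕ → ℝ) (x y : V)
    (X : ℕ → Ω → V × V) (n : ℕ) (ω : Ω) : ℝ :=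
  (n : ℝ)⁻¹ * ∑ j ∈ Finset.Icc 1 (n + 1), productKernel K d x y (w j) (X j ω)

theorem abs_productKernel_le {K : V → ℝ} {M : ℝ} (hKM : ∀ z, |K z| ≤ M) (d : ℕ) (x y : V)
    {h₀ h : ℝ} (hh₀ : 0 < h₀) (hh : h₀ ≤ h) (p : V × V) :
    |productKernel K d x y h p| ≤ M ^ 2 / h₀ ^ (2 * d) := by
  have hM : 0 ≤ M := (abs_nonneg (K 0)).trans (hKM 0)
  have hscale : 0 ≤ (h ^ (2 * d))⁻¹ := by have := hh₀.trans_le hh; positivity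
  rw [productKernel, abs_mul, abs_mul, abs_of_nonneg hscale, div_eq_inv_mul, sq]
  gcongr <;> apply hKM

variable [MeasurableSpace V] [MeasurableSub V] [MeasurableConstSMul ℝ V]

theorem measurable_productKernel {K : V → ℝ} (hK : Measurable K) (d : ℕ) (x y : V) (h : ℝ) :
    Measurable (productKernel K d x y h) := by
  unfold productKernel
  fun_prop

variable {Ω : Type*} [MeasurableSpace Ω] {P : Measure Ω} {X : ℕ → Ω → V × V} {K : V → ℝ}

theorem measurable_kernelEstimator (hK : Measurable K) (hX : ∀ n, Measurable (X n)) (d : ℕ)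
    (w : ℕ → ℝ) (x y : V) (n : ℕ) : Measurable (kernelEstimator K d w x y X n) :=
  (Finset.measurable_fun_sum _ fun j _ =>
    (measurable_productKernel hK d x y (w j)).comp (hX j)).const_mul _

theorem variance_kernelEstimator_le [IsFiniteMeasure P] {B b : ℝ}
    (hdecay : HasGeometricCovarianceDecay P X B b) (hb : 1 < b) (hX : ∀ n, Measurable (X n))
    (hK : Measurable K) {M : ℝ} (hKM : ∀ z, |K z| ≤ M) (d : ℕ) {w : ℕ → ℝ}
    (hwpos : ∀ j, 1 ≤ j → 0 < w j) (hwanti : AntitoneOn w (Set.Ici 1)) (x y : V) {n : ℕ}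
    (hn : 1 ≤ n) :
    Var[kernelEstimator K d w x y X n; P] ≤
      8 * M ^ 4 * B / (n * w (n + 1) ^ (4 * d) * (1 - b⁻¹)) := by
  have hB : 0 ≤ B := hdecay.nonneg (by positivity)
  have hn1 : (1 : ℝ) ≤ n := by exact_mod_cast hn
  have hwn : 0 < w (n + 1) := hwpos (n + 1) (by omega)
  have hgap : 0 < 1 - b⁻¹ := sub_pos.mpr (inv_lt_one_of_one_lt₀ hb)
  set C := M ^ 2 / w (n + 1) ^ (2 * d) with hC
  have hCsq : C ^ 2 = M ^ 4 / w (n + 1) ^ (4 * d) := by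
    rw [hC]
    ring
  have hterm : ∀ j ∈ Finset.Icc 1 (n + 1), ∀ p, |productKernel K d x y (w j) p| ≤ C := by
    intro j hj p
    obtain ⟨hj1, hjn⟩ := Finset.mem_Icc.mp hj
    exact abs_productKernel_le hKM d x y hwn (hwanti hj1 (hj1.trans hjn) hjn) p
  have hsum := hdecay.variance_sum_le hb hX (fun j hj => (Finset.mem_Icc.mp hj).1)
    (fun j _ => measurable_productKernel hK d x y (w j)) (by positivity) hterm
  calc Var[kernelEstimator K d w x y X n; P]
      = (n : ℝ)⁻¹ ^ 2 *
          Var[fun ω => ∑ j ∈ Finset.Icc 1 (n + 1), productKernel K d x y (w j) (X j ω); P] :=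
        variance_const_mul _ _ _
    _ ≤ (n : ℝ)⁻¹ ^ 2 * ((2 * n) * (4 * C ^ 2 * B * (1 - b⁻¹)⁻¹)) := by
        gcongr
        refine hsum.trans ?_
        gcongr
        rw [Nat.card_Icc, Nat.add_sub_cancel]
        push_cast
        linarith
    _ = 8 * M ^ 4 * B / (n * w (n + 1) ^ (4 * d) * (1 - b⁻¹)) := by
        rw [hCsq]
        field_simp
        ring

theorem tendsto_variance_kernelEstimator [IsFiniteMeasure P] {B b : ℝ}
    (hdecay : HasGeometricCovarianceDecay P X B b) (hb : 1 < b) (hX : ∀ n, Measurable (X n))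
    (hK : Measurable K) {M : ℝ} (hKM : ∀ z, |K z| ≤ M) (d : ℕ) {w : ℕ → ℝ}
    (hwpos : ∀ j, 1 ≤ j → 0 < w j) (hwanti : AntitoneOn w (Set.Ici 1))
    (hw : Tendsto (fun n : ℕ => n * w (n + 1) ^ (4 * d)) atTop atTop) (x y : V) :
    Tendsto (fun n => Var[kernelEstimator K d w x y X n; P]) atTop (nhds 0) := by
  have hgap : 0 < 1 - b⁻¹ := sub_pos.mpr (inv_lt_one_of_one_lt₀ hb)
  have hbound : Tendsto
      (fun n : ℕ => 8 * M ^ 4 * B / (n * w (n + 1) ^ (4 * d) * (1 - b⁻¹))) atTop (nhds 0) :=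
    (hw.atTop_mul_const hgap).const_div_atTop _
  refine squeeze_zero' (.of_forall fun n => variance_nonneg _ _) ?_ hbound
  filter_upwards [eventually_ge_atTop 1] with n hn
  exact variance_kernelEstimator_le hdecay hb hX hK hKM d hwpos hwanti x y hn

end KernelEstimator

section PowerBandwidth

variable {c β : ℝ}

theorem const_mul_natCast_rpow_pos (hc : 0 < c) (β : ℝ) (j : ℕ) (hj : 1 ≤ j) :
    0 < c * (j : ℝ) ^ β := by
  have : (0 : ℝ) < j := by exact_mod_cast hj
  positivity

theorem antitoneOn_const_mul_natCast_rpow_neg (hc : 0 ≤ c) (hβ : 0 ≤ β) :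
    AntitoneOn (fun j : ℕ => c * (j : ℝ) ^ (-β)) (Set.Ici 1) := by
  intro j hj k _ hjk
  have hj0 : (0 : ℝ) < j := by exact_mod_cast Set.mem_Ici.mp hj
  exact mul_le_mul_of_nonneg_left
    (Real.rpow_le_rpow_of_nonpos hj0 (by exact_mod_cast hjk) (neg_nonpos.mpr hβ)) hc

theorem tendsto_natCast_mul_const_mul_rpow_neg_pow_atTop (hc : 0 < c) (m : ℕ)
    (hβm : β * m < 1) :
    Tendsto (fun n : ℕ => n * (c * ((n + 1 : ℕ) : ℝ) ^ (-β)) ^ m) atTop atTop := by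
  have hratio : Tendsto (fun n : ℕ => (n : ℝ) / (n + 1)) atTop (nhds 1) :=
    tendsto_natCast_div_add_atTop 1
  have hpow : Tendsto (fun n : ℕ => ((n : ℝ) + 1) ^ (1 - β * m)) atTop atTop :=
    (tendsto_rpow_atTop (sub_pos.mpr hβm)).comp
      (tendsto_atTop_add_const_right _ 1 tendsto_natCast_atTop_atTop)
  refine ((hratio.pos_mul_atTop one_pos hpow).const_mul_atTop (pow_pos hc m)).congr fun n => ?_
  have hn : (0 : ℝ) < (n : ℝ) + 1 := by positivity
  rw [mul_pow, ← Real.rpow_mul_natCast (by positivity), Nat.cast_succ, sub_eq_add_neg,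
    Real.rpow_add hn, Real.rpow_one, neg_mul]
  field_simp

end PowerBandwidth

theorem stmt16_general
    {V : Type*} [AddCommGroup V] [Module ℝ V] [MeasurableSpace V] [MeasurableSub V]
    [MeasurableConstSMul ℝ V] {Ω : Type*} [MeasurableSpace Ω] (P : Measure Ω)
    [IsProbabilityMeasure P] (Zm Z : ℕ → Ω → V) (hZm : ∀ n, Measurable (Zm n))
    (hZ : ∀ n, Measurable (Z n)) (K : V → ℝ) (hK : Measurable K) (M : ℝ) (hKM : ∀ z, |K z| ≤ M)
    (B b : ℝ) (hb : 1 < b)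
    (hcov : ∀ g h : V → V → ℝ, Measurable (Function.uncurry g) → Measurable (Function.uncurry h) →
      (∀ u v, |g u v| ≤ 1) → (∀ u v, |h u v| ≤ 1) →
      ∀ k n : ℕ, 1 ≤ k → k ≤ n →
        |∫ ω, g (Zm k ω) (Z k ω) * h (Zm n ω) (Z n ω) ∂P -
          (∫ ω, g (Zm k ω) (Z k ω) ∂P) * (∫ ω, h (Zm n ω) (Z n ω) ∂P)| ≤
          B * b ^ (-((n : ℝ) - k)) * (1 + b ^ (-(k : ℝ))))
    (d : ℕ) (w : ℕ → ℝ) (hwpos : ∀ j, 1 ≤ j → 0 < w j) (hwanti : AntitoneOn w (Set.Ici 1))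
    (x y : V) (A : ℕ → Ω → ℝ)
    (hA : ∀ j ω, A j ω = (w j ^ (2 * d))⁻¹ *
      (K ((w j)⁻¹ • (Zm j ω - x)) * K ((w j)⁻¹ • (Z j ω - y))))
    (hhat : ℕ → Ω → ℝ)
    (hhhat : ∀ n ω, hhat n ω = (n : ℝ)⁻¹ * ∑ j ∈ Finset.Icc 1 (n + 1), A j ω) :
    (∀ n : ℕ, 1 ≤ n →
      ∫ ω, (hhat n ω - ∫ ω', hhat n ω' ∂P) ^ 2 ∂P ≤
        8 * M ^ 4 * B / (n * w (n + 1) ^ (4 * d) * (1 - b⁻¹))) ∧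
    (Tendsto (fun n : ℕ => n * w (n + 1) ^ (4 * d)) atTop atTop →
      Tendsto (fun n : ℕ => ∫ ω, (hhat n ω - ∫ ω', hhat n ω' ∂P) ^ 2 ∂P) atTop (nhds 0)) := by
  have hX : ∀ n, Measurable fun ω => (Zm n ω, Z n ω) := fun n => (hZm n).prodMk (hZ n)
  have hdecay := hasGeometricCovarianceDecay_prodMk hZm hZ hcov
  obtain rfl : hhat = kernelEstimator K d w x y fun n ω => (Zm n ω, Z n ω) := by
    funext n ω
    simp only [hhhat, hA, kernelEstimator, productKernel]
  simp only [← variance_eq_integral (measurable_kernelEstimator hK hX d w x y _).aemeasurable]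
  exact ⟨fun n => variance_kernelEstimator_le hdecay hb hX hK hKM d hwpos hwanti x y,
    fun hw => tendsto_variance_kernelEstimator hdecay hb hX hK hKM d hwpos hwanti hw x y⟩

theorem stmt16
    {d : ℕ} (hd : 1 ≤ d)
    {Ω : Type*} [MeasurableSpace Ω] (P : Measure Ω) [IsProbabilityMeasure P]
    (E : Set (EuclideanSpace ℝ (Fin d))) (hEopen : IsOpen E) (hEne : E.Nonempty)
    (Zm Z : ℕ → Ω → (EuclideanSpace ℝ (Fin d))) (hZmmeas : ∀ n, Measurable (Zm n)) (hZmeas : ∀ n, Measurable (Z n))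
    (hZmmem : ∀ n ω, Zm n ω ∈ closure E) (hZmem : ∀ n ω, Z n ω ∈ E)
    (K : (EuclideanSpace ℝ (Fin d)) → ℝ) (hKmeas : Measurable K) (hKnonneg : ∀ z, 0 ≤ K z)
    (CK : ℝ) (hKbdd : ∀ z, K z ≤ CK)
    (Bc bc : ℝ) (hBc : 0 < Bc) (hbc : 1 < bc)
    (hcov : ∀ g h : (EuclideanSpace ℝ (Fin d)) → (EuclideanSpace ℝ (Fin d)) → ℝ, Measurable (Function.uncurry g) → Measurable (Function.uncurry h) →
      (∀ a b, |g a b| ≤ 1) → (∀ a b, |h a b| ≤ 1) →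
      ∀ m n : ℕ, 1 ≤ m → m ≤ n →
        |∫ ω, g (Zm m ω) (Z m ω) * h (Zm n ω) (Z n ω) ∂P -
          (∫ ω, g (Zm m ω) (Z m ω) ∂P) * (∫ ω, h (Zm n ω) (Z n ω) ∂P)| ≤
          Bc * bc ^ (-((n:ℝ) - (m:ℝ))) * (1 + bc ^ (-(m:ℝ))))
    (w1 Beta : ℝ) (hw1 : 0 < w1) (hBeta : 0 < Beta)
    (w : ℕ → ℝ) (hw : ∀ j : ℕ, w j = w1 * (j:ℝ) ^ (-Beta))
    (x y : (EuclideanSpace ℝ (Fin d))) (hx : x ∈ E) (hy : y ∈ E)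
    (A : ℕ → Ω → ℝ)
    (hA : ∀ j ω, A j ω = ((w j) ^ (2*d))⁻¹ *
      (K ((w j)⁻¹ • (Zm j ω - x)) * K ((w j)⁻¹ • (Z j ω - y))))
    (hhat : ℕ → Ω → ℝ)
    (hhhat : ∀ n ω, hhat n ω = (n:ℝ)⁻¹ * ∑ j ∈ Finset.Icc 1 (n+1), A j ω) :
    (∀ n : ℕ, 1 ≤ n →
      ∫ ω, (hhat n ω - ∫ ω', hhat n ω' ∂P) ^ 2 ∂P ≤
        8 * CK ^ 4 * Bc / ((n:ℝ) * (w (n+1)) ^ (4*d) * (1 - bc⁻¹))) ∧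
    (4 * Beta * d < 1 →
      Tendsto (fun n : ℕ => ∫ ω, (hhat n ω - ∫ ω', hhat n ω' ∂P) ^ 2 ∂P) atTop (nhds 0)) := by
  obtain rfl : w = fun j : ℕ => w1 * (j : ℝ) ^ (-Beta) := funext hw
  have hmain := stmt16_general P Zm Z hZmmeas hZmeas K hKmeas CK
    (fun z => (abs_of_nonneg (hKnonneg z)).trans_le (hKbdd z)) Bc bc hbc hcov d _
    (const_mul_natCast_rpow_pos hw1 (-Beta))
    (antitoneOn_const_mul_natCast_rpow_neg hw1.le hBeta.le) x y A hA hhat hhhat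
  exact hmain.imp_right fun hvanish hβd =>
    hvanish (tendsto_natCast_mul_const_mul_rpow_neg_pow_atTop hw1 (4 * d) (by push_cast; linarith))
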